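/- arXiv:math/0009239 — 2 statements merged into one kernel-verified Lean document; each statement's English description precedes it below -/
import Mathlib

section
/- The map T : 𝔗(E) → Vect_pol(E) defined on each homogeneous component by T(M)(x) = −(1/(p+1)!) M(x, ..., x) for M ∈ 𝔗_p(E) and x ∈ E is an isomorphism of Lie algebras. -/
/-!
Evaluating the polynomial vector field `T M` at `x` gives `-(1/k!) M(x, …, x)`, and applying a
vector field with coefficients `c` to it gives, by Leibniz and the symmetry of `M`,
`-(k/k!) M(c(x), x, …, x)` (`eval_derivation_vectCoeffs`, `symT_update`). On the diagonal all the terms of the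
sum over permutations in `halfBracket` coincide, so it reduces to the same expression up to a
factorial; comparing the two gives the compatibility with brackets.

For bijectivity, `T` sends the `k`-linear component to vector fields with homogeneous coefficients
of degree `k`, so injectivity may be checked on each component. Two monomials `∏ X (f j)` and
`∏ X (g j)` agree only when `f` and `g` differ by a permutation
(`exists_perm_of_sum_single_eq`), so the coefficient of `∏ X (g j)` in `T M` is a nonzero multiple
of `M(e_{g 0}, …, e_{g (k-1)})`; hence `T M = 0` forces `M = 0`. For surjectivity, a monomial
vector field `∏ X (g j) ∂_i` is, up to sign, the image of the symmetrization of
`v ↦ ∏ v_j (g j) • e_i` (`symMonomial`).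
-/

section SymMultilinear

variable (R : Type*) [Field R] (V : Type*) [AddCommGroup V] [Module R V]

/-- `𝔗_{k-1}(V) ⊆` the `k`-multilinear maps: the symmetric ones.  (Here `k = p + 1` is the
number of arguments, so `SymT R V k` is the component `𝔗_p(V)` of `𝔗(V)`.) -/
def SymT (k : ℕ) : Submodule R (MultilinearMap R (fun _ : Fin k => V) V) where
  carrier := {M | ∀ (σ : Equiv.Perm (Fin k)) (v : Fin k → V), M (v ∘ σ) = M v}
  add_mem' := by intro a b ha hb σ v; simp [ha σ v, hb σ v]
  zero_mem' := by intro σ v; simp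
  smul_mem' := by intro c a ha σ v; simp [ha σ v]

/-- The first half of the bracket of `𝔗(V)`: for `t ∈ 𝔗_p(V)` (with `k = p+1` arguments) and
`t' ∈ 𝔗_q(V)` (with `l = q+1` arguments), this is
`x ↦ (1/(p!(q+1)!)) Σ_σ t(t'(x_{σ(0)},…,x_{σ(q)}), x_{σ(q+1)},…,x_{σ(p+q)})`,
the sum being over all permutations of `{0,…,p+q}`; it vanishes if `t` is a constant. -/
noncomputable def halfBracket (k l : ℕ) :
    MultilinearMap R (fun _ : Fin k => V) V → MultilinearMap R (fun _ : Fin l => V) V →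
      (Fin (k + l - 1) → V) → V :=
  match k with
  | 0 => fun _ _ _ => 0
  | k' + 1 => fun t t' x =>
      (((k'.factorial * l.factorial : ℕ) : R))⁻¹ •
        ∑ σ : Equiv.Perm (Fin (k' + 1 + l - 1)),
          t (Fin.cons
              (t' fun j : Fin l => x (σ ⟨j.1, by have := j.2; omega⟩))
              (fun j : Fin k' => x (σ ⟨l + j.1, by have := j.2; omega⟩)))

/-- The bracket of `𝔗(V)` on homogeneous components, as a function: for `t ∈ 𝔗_p(V)` and
`t' ∈ 𝔗_q(V)`, `[t,t'] ∈ 𝔗_{p+q}(V)` is given by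
`[t,t'](x_0,…,x_{p+q}) = (1/(p!(q+1)!)) Σ_σ t(t'(x_{σ(0)},…,x_{σ(q)}), x_{σ(q+1)},…)
  − (1/((p+1)!q!)) Σ_σ t'(t(x_{σ(0)},…,x_{σ(p)}), x_{σ(p+1)},…)`. -/
noncomputable def symBracketFun (k l : ℕ)
    (t : MultilinearMap R (fun _ : Fin k => V) V)
    (t' : MultilinearMap R (fun _ : Fin l => V) V) :
    (Fin (k + l - 1) → V) → V :=
  fun x => halfBracket R V k l t t' x -
    halfBracket R V l k t' t fun j => x (Fin.cast (by omega) j)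

end SymMultilinear

open MvPolynomial DirectSum

/-- The Lie algebra of polynomial vector fields on `E = 𝕜^n`, realized as the
derivations of the polynomial algebra `𝕜[x_1, …, x_n]`. -/
abbrev Vect (𝕜 : Type*) [Field 𝕜] (n : ℕ) : Type _ :=
  Derivation 𝕜 (MvPolynomial (Fin n) 𝕜) (MvPolynomial (Fin n) 𝕜)

variable (𝕜 : Type*) [Field 𝕜] (n : ℕ)

/-- The coefficients of the polynomial vector field `x ↦ -(1/(p+1)!) M(x, …, x)` associated
to a symmetric `(p+1)`-linear map `M ∈ 𝔗_p(E)` (`k = p+1`), expanded multilinearly in the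
standard basis of `E = 𝕜^n`. -/
noncomputable def vectCoeffs (k : ℕ) :
    ↥(SymT 𝕜 (Fin n → 𝕜) k) →ₗ[𝕜] (Fin n → MvPolynomial (Fin n) 𝕜) where
  toFun M := fun i =>
    (-((k.factorial : ℕ) : 𝕜)⁻¹) • ∑ f : Fin k → Fin n,
      ((M : MultilinearMap 𝕜 (fun _ : Fin k => (Fin n → 𝕜)) (Fin n → 𝕜))
          (fun j => Pi.single (f j) 1) i) • ∏ j, MvPolynomial.X (f j)
  map_add' M N := by
    funext i
    simp [add_smul, Finset.sum_add_distrib, smul_add]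
  map_smul' c M := by
    funext i
    simp only [SetLike.val_smul, MultilinearMap.smul_apply, Pi.smul_apply, smul_eq_mul,
      RingHom.id_apply, mul_smul, ← Finset.smul_sum]
    rw [smul_comm]

/-- The map `T : 𝔗(E) → Vect_pol(E)`, `T(M)(x) = -(1/(p+1)!) M(x, …, x)` for
`M ∈ 𝔗_p(E)`. -/
noncomputable def TT : (⨁ k : ℕ, ↥(SymT 𝕜 (Fin n → 𝕜) k)) →ₗ[𝕜] Vect 𝕜 n :=
  DirectSum.toModule 𝕜 ℕ (Vect 𝕜 n) fun k =>
    (MvPolynomial.mkDerivationEquiv 𝕜).toLinearMap ∘ₗ vectCoeffs 𝕜 n k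

section Helpers

variable {𝕜 n}

theorem vectCoeffs_apply {k : ℕ} (M : SymT 𝕜 (Fin n → 𝕜) k) (i : Fin n) :
    vectCoeffs 𝕜 n k M i = (-((k.factorial : ℕ) : 𝕜)⁻¹) • ∑ f : Fin k → Fin n,
      (M.1 (fun j => Pi.single (f j) 1) i) • ∏ j, MvPolynomial.X (f j) := rfl

theorem directSum_toModule_of {R N : Type*} [Semiring R] {β : ℕ → Type*} [∀ k, AddCommMonoid (β k)]
    [∀ k, Module R (β k)] [AddCommMonoid N] [Module R N] (φ : ∀ k, β k →ₗ[R] N) (k : ℕ)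
    (a : β k) : DirectSum.toModule R ℕ N φ (DirectSum.of β k a) = φ k a := by
  rw [← DirectSum.lof_eq_of R, DirectSum.toModule_lof]

theorem TT_of (k : ℕ) (M : SymT 𝕜 (Fin n → 𝕜) k) :
    TT 𝕜 n (DirectSum.of (fun k => ↥(SymT 𝕜 (Fin n → 𝕜) k)) k M) =
      MvPolynomial.mkDerivation 𝕜 (vectCoeffs 𝕜 n k M) :=
  directSum_toModule_of
    (fun k => (MvPolynomial.mkDerivationEquiv 𝕜).toLinearMap ∘ₗ vectCoeffs 𝕜 n k) k M

/-! ### Brackets -/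

/-- Expansion of a multilinear map in the standard basis. -/
theorem multilinear_expand {k : ℕ}
    (M : MultilinearMap 𝕜 (fun _ : Fin k => (Fin n → 𝕜)) (Fin n → 𝕜))
    (v : Fin k → Fin n → 𝕜) :
    M v = ∑ f : Fin k → Fin n, (∏ j, v j (f j)) • M (fun j => Pi.single (f j) 1) := by
  have hv : v = fun j => ∑ a : Fin n, v j a • (Pi.single a 1 : Fin n → 𝕜) := by
    funext j
    exact pi_eq_sum_univ' (v j)
  conv_lhs => rw [hv]
  rw [MultilinearMap.map_sum]
  exact Finset.sum_congr rfl fun f _ => MultilinearMap.map_smul_univ _ _ _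

theorem derivation_prod {ι : Type*} [DecidableEq ι] (D : Vect 𝕜 n) (s : Finset ι)
    (g : ι → MvPolynomial (Fin n) 𝕜) :
    D (∏ j ∈ s, g j) = ∑ j ∈ s, (∏ m ∈ s.erase j, g m) * D (g j) := by
  induction s using Finset.induction_on with
  | empty => simp
  | insert a s ha ih =>
    rw [Finset.prod_insert ha, Derivation.leibniz, Finset.sum_insert ha,
      Finset.erase_insert ha, ih, smul_eq_mul, smul_eq_mul, Finset.mul_sum, add_comm]
    congr 1
    refine Finset.sum_congr rfl fun j hj => ?_
    have hja : a ≠ j := fun h => ha (h ▸ hj)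
    rw [Finset.erase_insert_of_ne hja, Finset.prod_insert (by simp [ha]), mul_assoc]

/-- A symmetric map takes the same value wherever the distinguished argument is placed. -/
theorem symT_update {k : ℕ} (M : SymT 𝕜 (Fin n → 𝕜) (k + 1)) (x y : Fin n → 𝕜)
    (j : Fin (k + 1)) :
    M.1 (Function.update (fun _ => x) j y) = M.1 (Fin.cons y (fun _ => x)) := by
  rw [← M.2 (Equiv.swap 0 j) (Fin.cons y (fun _ => x))]
  congr 1
  funext m
  rcases eq_or_ne m j with rfl | hm
  · simp
  · rw [Function.update_of_ne hm, Function.comp_apply]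
    have : Equiv.swap 0 j m ≠ 0 := by
      intro h
      apply hm
      simpa using congrArg (Equiv.swap 0 j) h
    obtain ⟨r, hr⟩ := Fin.exists_succ_eq.2 this
    rw [← hr, Fin.cons_succ]

theorem eval_vectCoeffs {k : ℕ} (M : SymT 𝕜 (Fin n → 𝕜) k) (x : Fin n → 𝕜) :
    (fun i => MvPolynomial.eval x (vectCoeffs 𝕜 n k M i)) =
      (-((k.factorial : ℕ) : 𝕜)⁻¹) • M.1 (fun _ => x) := by
  funext i
  rw [multilinear_expand M.1, vectCoeffs_apply]
  simp [MvPolynomial.smul_eval, map_prod, mul_comm]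

theorem eval_derivation_vectCoeffs {k : ℕ} (M : SymT 𝕜 (Fin n → 𝕜) k) (D : Vect 𝕜 n)
    (x : Fin n → 𝕜) (i : Fin n) :
    MvPolynomial.eval x (D (vectCoeffs 𝕜 n k M i)) = (-((k.factorial : ℕ) : 𝕜)⁻¹) *
      ∑ j : Fin k, M.1 (Function.update (fun _ => x) j
        (fun a => MvPolynomial.eval x (D (X a)))) i := by
  have h : ∀ (j : Fin k) (f : Fin k → Fin n),
      ∏ m, (Function.update (fun _ => x) j (fun a => MvPolynomial.eval x (D (X a))) :
        Fin k → Fin n → 𝕜) m (f m) =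
      (∏ m ∈ Finset.univ.erase j, x (f m)) * MvPolynomial.eval x (D (X (f j))) := by
    intro j f
    rw [← Finset.prod_erase_mul _ _ (Finset.mem_univ j), Function.update_self]
    congr 1
    refine Finset.prod_congr rfl fun m hm => ?_
    rw [Function.update_of_ne (Finset.ne_of_mem_erase hm)]
  simp_rw [multilinear_expand M.1 (Function.update _ _ _), h, vectCoeffs_apply]
  rw [Derivation.map_smul, map_sum, MvPolynomial.smul_eval, map_sum]
  simp only [Finset.sum_apply, Pi.smul_apply, smul_eq_mul]
  rw [Finset.sum_comm]
  congr 1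
  refine Finset.sum_congr rfl fun f _ => ?_
  rw [Derivation.map_smul, derivation_prod, MvPolynomial.smul_eval, map_sum, Finset.mul_sum]
  refine Finset.sum_congr rfl fun j _ => ?_
  simp only [map_mul, map_prod, MvPolynomial.eval_X]
  ring

/-- One half of the bracket formula: `c · ∂(T M)`, where `c = T M'`, is the diagonal value of the
corresponding half of the bracket of `𝔗(E)`, divided by `(k + l - 1)!`. -/
theorem eval_half [CharZero 𝕜] {k l N : ℕ} (hN : N = k + l - 1) (M : SymT 𝕜 (Fin n → 𝕜) k)
    (M' : SymT 𝕜 (Fin n → 𝕜) l) (x : Fin n → 𝕜) (i : Fin n) :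
    MvPolynomial.eval x (MvPolynomial.mkDerivation 𝕜 (vectCoeffs 𝕜 n l M')
        (vectCoeffs 𝕜 n k M i)) =
      ((N.factorial : ℕ) : 𝕜)⁻¹ *
        halfBracket 𝕜 (Fin n → 𝕜) k l M.1 M'.1 (fun _ => x) i := by
  subst hN
  rw [eval_derivation_vectCoeffs]
  cases k with
  | zero => simp [halfBracket]
  | succ k =>
    simp_rw [symT_update M, MvPolynomial.mkDerivation_X, eval_vectCoeffs M']
    have hs : M.1 (Fin.cons ((-((l.factorial : ℕ) : 𝕜)⁻¹) • M'.1 (fun _ => x)) (fun _ => x)) =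
        (-((l.factorial : ℕ) : 𝕜)⁻¹) • M.1 (Fin.cons (M'.1 (fun _ => x)) (fun _ => x)) :=
      M.1.cons_smul _ _ _
    rw [hs]
    have h1 : (((k + 1 + l - 1).factorial : ℕ) : 𝕜) ≠ 0 :=
      Nat.cast_ne_zero.2 (Nat.factorial_ne_zero _)
    have h2 : ((k.factorial : ℕ) : 𝕜) ≠ 0 := Nat.cast_ne_zero.2 (Nat.factorial_ne_zero _)
    have h3 : ((l.factorial : ℕ) : 𝕜) ≠ 0 := Nat.cast_ne_zero.2 (Nat.factorial_ne_zero _)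
    have h4 : (k : 𝕜) + 1 ≠ 0 := by exact_mod_cast Nat.succ_ne_zero k
    simp only [halfBracket, Finset.sum_const, Finset.card_univ, Fintype.card_perm,
      Fintype.card_fin, ← Nat.cast_smul_eq_nsmul 𝕜, Pi.smul_apply, smul_eq_mul, Nat.factorial_succ]
    push_cast
    field_simp

/-! ### Bijectivity -/

theorem prod_X_eq {k : ℕ} (f : Fin k → Fin n) :
    (∏ j, X (f j) : MvPolynomial (Fin n) 𝕜) =
      monomial (∑ j, Finsupp.single (f j) 1) 1 := by
  rw [MvPolynomial.monomial_sum_one]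
  rfl

theorem exists_perm_of_sum_single_eq {k : ℕ} {f g : Fin k → Fin n}
    (h : (∑ j, Finsupp.single (f j) 1 : Fin n →₀ ℕ) = ∑ j, Finsupp.single (g j) 1) :
    ∃ σ : Equiv.Perm (Fin k), f = g ∘ σ := by
  have hc : ∀ c, Nonempty ({a // f a = c} ≃ {a // g a = c}) := by
    intro c
    rw [← Fintype.card_eq, Fintype.card_subtype, Fintype.card_subtype]
    have := DFunLike.congr_fun h c
    simpa only [Finsupp.coe_finsetSum, Finset.sum_apply, Finsupp.single_apply,
      ← Finset.card_filter] using this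
  exact ⟨Equiv.ofFiberEquiv fun c => (hc c).some,
    funext fun a => (Equiv.ofFiberEquiv_map _ a).symm⟩

theorem vectCoeffs_homogeneous {k : ℕ} (M : SymT 𝕜 (Fin n → 𝕜) k) (i : Fin n) :
    (vectCoeffs 𝕜 n k M i).IsHomogeneous k := by
  rw [vectCoeffs_apply, ← mem_homogeneousSubmodule]
  refine Submodule.smul_mem _ _ (Submodule.sum_mem _ fun f _ => Submodule.smul_mem _ _ ?_)
  rw [mem_homogeneousSubmodule]
  simpa using IsHomogeneous.prod Finset.univ (fun j => (X (f j) : MvPolynomial (Fin n) 𝕜))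
    (fun _ => 1) (fun j _ => isHomogeneous_X _ _)

theorem vectCoeffs_injective [CharZero 𝕜] (k : ℕ) : Function.Injective (vectCoeffs 𝕜 n k) := by
  rw [injective_iff_map_eq_zero]
  intro M hM
  have key : ∀ g : Fin k → Fin n, M.1 (fun j => Pi.single (g j) 1) = 0 := by
    intro g
    funext i
    have h := congrArg (coeff (∑ j, Finsupp.single (g j) 1)) (congrFun hM i)
    simp only [vectCoeffs_apply, prod_X_eq, coeff_smul, coeff_sum, coeff_monomial,
      Pi.zero_apply, coeff_zero, smul_eq_mul, mul_ite, mul_one, mul_zero] at h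
    -- all the nonzero contributions come from permutations of `g`, where `M` has the same value
    have h' : ∀ f : Fin k → Fin n,
        (if (∑ j, Finsupp.single (f j) 1 : Fin n →₀ ℕ) = ∑ j, Finsupp.single (g j) 1 then
          M.1 (fun j => Pi.single (f j) 1) i else 0) =
        (if (∑ j, Finsupp.single (f j) 1 : Fin n →₀ ℕ) = ∑ j, Finsupp.single (g j) 1 then
          M.1 (fun j => Pi.single (g j) 1) i else 0) := by
      intro f
      split_ifs with hf
      · obtain ⟨σ, rfl⟩ := exists_perm_of_sum_single_eq hf
        exact congrFun (M.2 σ (fun j => Pi.single (g j) 1)) i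
      · rfl
    simp_rw [h'] at h
    rw [← Finset.sum_filter, Finset.sum_const, nsmul_eq_mul] at h
    have h0 : -((k.factorial : ℕ) : 𝕜)⁻¹ ≠ 0 :=
      neg_ne_zero.2 (inv_ne_zero (Nat.cast_ne_zero.2 (Nat.factorial_ne_zero _)))
    have h1 := (mul_eq_zero.1 h).resolve_left h0
    refine (mul_eq_zero.1 h1).resolve_left (Nat.cast_ne_zero.2 ?_)
    exact Finset.card_ne_zero_of_mem (a := g) (by simp)
  refine Subtype.ext (MultilinearMap.ext fun v => ?_)
  rw [multilinear_expand M.1]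
  simp [key]

/-- The symmetrization of the multilinear map `v ↦ ∏ v_j (g j) • w`. -/
noncomputable def symMonomial {k : ℕ} (g : Fin k → Fin n) (w : Fin n → 𝕜) :
    SymT 𝕜 (Fin n → 𝕜) k :=
  ⟨∑ σ : Equiv.Perm (Fin k), ((MultilinearMap.mkPiAlgebra 𝕜 (Fin k) 𝕜).compLinearMap
      fun j => LinearMap.proj (g (σ j))).smulRight w, by
    intro τ v
    simp only [_root_.sum_apply, MultilinearMap.smulRight_apply,
      MultilinearMap.compLinearMap_apply, MultilinearMap.mkPiAlgebra_apply, LinearMap.proj_apply,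
      Function.comp_apply]
    refine Fintype.sum_equiv (Equiv.mulRight τ⁻¹) _ _ fun σ => ?_
    congr 1
    exact Fintype.prod_equiv τ _ _ fun j => by simp⟩

theorem symMonomial_apply {k : ℕ} (g : Fin k → Fin n) (w : Fin n → 𝕜) (v : Fin k → Fin n → 𝕜) :
    (symMonomial g w).1 v = ∑ σ : Equiv.Perm (Fin k), (∏ j, v j (g (σ j))) • w := by
  simp [symMonomial]

theorem vectCoeffs_symMonomial [CharZero 𝕜] {k : ℕ} (g : Fin k → Fin n) (w : Fin n → 𝕜) (i : Fin n) :
    vectCoeffs 𝕜 n k (symMonomial g w) i = -(w i) • ∏ j, X (g j) := by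
  have hk : ((k.factorial : ℕ) : 𝕜) ≠ 0 := Nat.cast_ne_zero.2 (Nat.factorial_ne_zero _)
  have hp : ∀ (σ : Equiv.Perm (Fin k)) (f : Fin k → Fin n),
      (∏ j, (Pi.single (f j) 1 : Fin n → 𝕜) (g (σ j))) = if f = g ∘ σ then 1 else 0 := by
    intro σ f
    simp only [Pi.single_apply, Finset.prod_ite_zero, Finset.prod_const_one, funext_iff,
      Finset.mem_univ, true_implies, Function.comp_apply, eq_comm]
  have hσ : ∀ σ : Equiv.Perm (Fin k),
      (∏ j, X (g (σ j)) : MvPolynomial (Fin n) 𝕜) = ∏ j, X (g j) :=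
    fun σ => Equiv.prod_comp σ fun j => X (g j)
  simp only [vectCoeffs_apply, symMonomial_apply, hp, Finset.sum_apply, Pi.smul_apply,
    Finset.sum_smul]
  rw [Finset.sum_comm]
  simp only [smul_eq_mul, ite_mul, one_mul, zero_mul, ite_smul, zero_smul, Finset.sum_ite_eq',
    Finset.mem_univ, if_true, Function.comp_apply, hσ, Finset.sum_const,
    Finset.card_univ, Fintype.card_perm, Fintype.card_fin]
  rw [← Nat.cast_smul_eq_nsmul 𝕜, smul_smul, smul_smul, neg_mul, inv_mul_cancel₀ hk,
    neg_one_mul]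

theorem exists_prod_X_eq_monomial (d : Fin n →₀ ℕ) :
    ∃ (k : ℕ) (g : Fin k → Fin n), (∏ j, X (g j) : MvPolynomial (Fin n) 𝕜) = monomial d 1 := by
  induction d using Finsupp.induction_linear with
  | zero => exact ⟨0, Fin.elim0, by simp⟩
  | add d e hd he =>
    obtain ⟨k, g, hg⟩ := hd
    obtain ⟨l, h, hh⟩ := he
    exact ⟨k + l, Fin.append g h, by simp [Fin.prod_univ_add, hg, hh, monomial_mul]⟩
  | single a m => exact ⟨m, fun _ => a, by simp [X_pow_eq_monomial]⟩

theorem TT_apply (a : ⨁ k : ℕ, ↥(SymT 𝕜 (Fin n → 𝕜) k)) :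
    TT 𝕜 n a = MvPolynomial.mkDerivationEquiv 𝕜
      (DirectSum.toModule 𝕜 ℕ _ (fun k => vectCoeffs 𝕜 n k) a) := by
  induction a using DirectSum.induction_on with
  | zero => simp
  | of k M =>
    rw [TT_of, directSum_toModule_of]
    rfl
  | add a b ha hb => simp [ha, hb]

theorem homogeneousComponent_toModule (a : ⨁ k : ℕ, ↥(SymT 𝕜 (Fin n → 𝕜) k)) (m : ℕ)
    (i : Fin n) :
    homogeneousComponent m (DirectSum.toModule 𝕜 ℕ _ (fun k => vectCoeffs 𝕜 n k) a i) =
      vectCoeffs 𝕜 n m (a m) i := by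
  induction a using DirectSum.induction_on with
  | zero => simp
  | of k M =>
    rw [directSum_toModule_of, homogeneousComponent_of_mem (vectCoeffs_homogeneous M i)]
    split_ifs with hm
    · subst hm
      rw [DirectSum.of_eq_same]
    · rw [DirectSum.of_eq_of_ne _ _ _ hm]
      simp
  | add a b ha hb => simp [ha, hb]

theorem TT_bijective [CharZero 𝕜] : Function.Bijective (TT 𝕜 n) := by
  constructor
  · rw [injective_iff_map_eq_zero]
    intro a ha
    rw [TT_apply, LinearEquiv.map_eq_zero_iff] at ha
    refine DFinsupp.ext fun m => vectCoeffs_injective m ?_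
    funext i
    rw [← homogeneousComponent_toModule, ha]
    simp
  · rw [← LinearMap.range_eq_top, eq_top_iff]
    rintro D -
    obtain ⟨c, rfl⟩ := (MvPolynomial.mkDerivationEquiv 𝕜).surjective D
    have hc : c = ∑ i, Pi.single i (c i) := (Finset.univ_sum_single c).symm
    rw [hc, map_sum]
    refine Submodule.sum_mem _ fun i _ => ?_
    induction c i using MvPolynomial.induction_on' with
    | monomial d r =>
      obtain ⟨k, g, hg⟩ := exists_prod_X_eq_monomial (𝕜 := 𝕜) d
      refine ⟨DirectSum.of (fun k => ↥(SymT 𝕜 (Fin n → 𝕜) k)) k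
        (symMonomial g (Pi.single i (-r))), ?_⟩
      rw [TT_of]
      refine congrArg (MvPolynomial.mkDerivation 𝕜) (funext fun j => ?_)
      rw [vectCoeffs_symMonomial, hg]
      rcases eq_or_ne j i with rfl | hj
      · simp [smul_monomial]
      · simp [hj]
    | add p q hp hq =>
      rw [Pi.single_add, map_add]
      exact Submodule.add_mem _ hp hq

end Helpers

/-- The map `T : 𝔗(E) → Vect_pol(E)` defined by `T(M)(x) = -(1/(p+1)!) M(x,…,x)` on
`𝔗_p(E)` is an isomorphism of Lie algebras: it is a linear bijection and it intertwines the
bracket of `𝔗(E)` (given on homogeneous components by `symBracketFun`) with the bracket of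
vector fields (stated here after evaluation at an arbitrary point `x`, which determines the
polynomial vector field `T[M, M']`). -/
theorem statement10 (𝕜 : Type) [RCLike 𝕜] (n : ℕ) (hn : 0 < n) :
    Function.Bijective (TT 𝕜 n) ∧
    ∀ (k l : ℕ) (M : ↥(SymT 𝕜 (Fin n → 𝕜) k)) (M' : ↥(SymT 𝕜 (Fin n → 𝕜) l))
      (x : Fin n → 𝕜) (i : Fin n),
      MvPolynomial.eval x
          (⁅TT 𝕜 n (DirectSum.of (fun k => ↥(SymT 𝕜 (Fin n → 𝕜) k)) k M),
            TT 𝕜 n (DirectSum.of (fun k => ↥(SymT 𝕜 (Fin n → 𝕜) k)) l M')⁆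
            (MvPolynomial.X i)) =
        -((((k + l - 1).factorial : ℕ) : 𝕜))⁻¹ *
          symBracketFun 𝕜 (Fin n → 𝕜) k l M M' (fun _ => x) i := by
  refine ⟨TT_bijective, fun k l M M' x i => ?_⟩
  rw [TT_of, TT_of, Derivation.commutator_apply, MvPolynomial.mkDerivation_X,
    MvPolynomial.mkDerivation_X, map_sub, eval_half (N := k + l - 1) (by omega) M' M,
    eval_half (N := k + l - 1) rfl M M']
  simp only [symBracketFun, Pi.sub_apply]
  ring
end

section
/- Let E be a finite-dimensional complex vector space of dimension n ≥ 1 and let L = L_{−1} ⊕ L_0 ⊕ L_1 be an irreducible graded Lie subalgebra of Vect_pol(E) with L_{−1} = Vect_{−1}(E) and L_1 ≠ 0. Then every finite-dimensional Lie subalgebra L' of Vect_pol(E) containing L equals L. -/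
/-!
Every Lie subalgebra `M ⊇ L` is transitive: repeatedly bracketing a nonzero field with constant
fields produces a nonzero constant field. By irreducibility, any nonzero `L`-stable subspace of
polynomial vector fields therefore contains the space `V` of all constant fields
(`VectP_neg_one_le`).

Consequently a nonzero abelian ideal of a finite-dimensional `M ⊇ L` would contain `V` and
`[V, L₁]`, forcing `[V, [V, L₁]] = 0` and so `L₁ = 0`. Hence `M`, and in particular `L` itself, has
trivial radical (`hasTrivialRadical_of_le`), and by Cartan's criterion the Killing form of `M` is
nondegenerate.

Let `P` be the orthogonal complement of `L` in `M` for the Killing form of `M`. It is `L`-stable,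
and `P ∩ L` is an ideal of `L` on which this form vanishes, so it is solvable
(`isSolvable_of_killingForm_eq_zero`), hence zero. If `P` were nonzero it would contain `V`, which
lies in `L`: a contradiction. So `P = 0` and, by nondegeneracy, `L = M`.
-/

open MvPolynomial

variable (𝕜 : Type*) [Field 𝕜] (n : ℕ)

/-- The Euler vector field `ℰ = Σ x^j ∂_j`. -/
noncomputable def euler : Vect 𝕜 n :=
  MvPolynomial.mkDerivation 𝕜 fun i => MvPolynomial.X i

/-- `Vect_p(E)`: the eigenspace of `ad(ℰ)` for the eigenvalue `p`, i.e. the vector fields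
with homogeneous coefficients of degree `p+1`. -/
noncomputable def VectP (p : ℤ) : Submodule 𝕜 (Vect 𝕜 n) :=
  Module.End.eigenspace (LieAlgebra.ad 𝕜 (Vect 𝕜 n) (euler 𝕜 n)) ((p : 𝕜))

/-- A Lie subalgebra `L` of `Vect_pol(E)` is graded if `L = ⊕_{p ≥ -1} (L ∩ Vect_p(E))`. -/
def IsGradedSubalg (L : LieSubalgebra 𝕜 (Vect 𝕜 n)) : Prop :=
  L.toSubmodule = ⨆ p ≥ (-1 : ℤ), (L.toSubmodule ⊓ VectP 𝕜 n p)

/-- A Lie subalgebra `L` of `Vect_pol(E)` is maximal if the only subalgebras containing it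
are `L` itself and `Vect_pol(E)`. -/
def IsMaxSubalg (L : LieSubalgebra 𝕜 (Vect 𝕜 n)) : Prop :=
  ∀ L' : LieSubalgebra 𝕜 (Vect 𝕜 n), L ≤ L' → L' = L ∨ L' = ⊤

/-- A graded subalgebra `L` is irreducible if the representation of `L₀ = L ∩ Vect_0(E)` on
`L₋₁ = L ∩ Vect_{-1}(E)` given by the adjoint action is irreducible. -/
def IsIrreducibleRep (L : LieSubalgebra 𝕜 (Vect 𝕜 n)) : Prop :=
  L.toSubmodule ⊓ VectP 𝕜 n (-1) ≠ ⊥ ∧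
    ∀ F : Submodule 𝕜 (Vect 𝕜 n), F ≤ L.toSubmodule ⊓ VectP 𝕜 n (-1) →
      (∀ x ∈ L.toSubmodule ⊓ VectP 𝕜 n 0, ∀ y ∈ F, ⁅x, y⁆ ∈ F) →
      F = ⊥ ∨ F = L.toSubmodule ⊓ VectP 𝕜 n (-1)

lemma lie_pderiv_apply_X {n : ℕ} (i j : Fin n) (D : Vect ℂ n) :
    ⁅(pderiv i : Vect ℂ n), D⁆ (X j) = pderiv i (D (X j)) := by
  classical
  rw [Derivation.commutator_apply, pderiv_X, sub_eq_self]
  rcases eq_or_ne i j with rfl | h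
  · rw [Pi.single_eq_same, Derivation.map_one_eq_zero]
  · rw [Pi.single_eq_of_ne h.symm, map_zero]

lemma mem_VectP {n : ℕ} (p : ℤ) (D : Vect ℂ n) :
    D ∈ VectP ℂ n p ↔ ⁅euler ℂ n, D⁆ = (p : ℂ) • D := by
  rw [VectP, Module.End.mem_eigenspace_iff, LieAlgebra.ad_apply]

lemma lie_mem_VectP {n : ℕ} {p q r : ℤ} (h : p + q = r) {D D' : Vect ℂ n}
    (hD : D ∈ VectP ℂ n p) (hD' : D' ∈ VectP ℂ n q) : ⁅D, D'⁆ ∈ VectP ℂ n r := by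
  rw [mem_VectP] at *
  have key : ∀ {A : Type} [LieRing A] [LieAlgebra ℂ A] (e x y : A), ⁅e, x⁆ = (p : ℂ) • x →
      ⁅e, y⁆ = (q : ℂ) • y → ⁅e, ⁅x, y⁆⁆ = (r : ℂ) • ⁅x, y⁆ := by
    intro A _ _ e x y hx hy
    rw [leibniz_lie, hx, hy, smul_lie, lie_smul, ← add_smul, ← h, Int.cast_add]
  exact key _ _ _ hD hD'

lemma eq_zero_of_mem_VectP {n : ℕ} {p q : ℤ} (h : p ≠ q) {D : Vect ℂ n}
    (hp : D ∈ VectP ℂ n p) (hq : D ∈ VectP ℂ n q) : D = 0 := by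
  rw [mem_VectP] at *
  by_contra h0
  exact h (by exact_mod_cast smul_left_injective ℂ h0 (hp.symm.trans hq))

lemma mem_VectP_neg_one_of_const {n : ℕ} (D : Vect ℂ n)
    (h : ∀ j, ∃ c : ℂ, D (X j) = C c) : D ∈ VectP ℂ n (-1) := by
  rw [mem_VectP]
  refine derivation_ext fun j => ?_
  obtain ⟨c, hc⟩ := h j
  simp [Derivation.commutator_apply, euler, hc]

lemma pderiv_mem_VectP {n : ℕ} (i : Fin n) : (pderiv i : Vect ℂ n) ∈ VectP ℂ n (-1) := by
  classical
  refine mem_VectP_neg_one_of_const _ fun j => ?_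
  rcases eq_or_ne j i with rfl | h
  · exact ⟨1, by simp⟩
  · exact ⟨0, by simp [pderiv_X_of_ne h]⟩

lemma eq_C_of_pderiv_eq_zero {n : ℕ} (p : MvPolynomial (Fin n) ℂ)
    (h : ∀ i, pderiv i p = 0) : p = C (coeff 0 p) := by
  ext m
  rw [coeff_C]
  split_ifs with hm
  · rw [hm]
  · obtain ⟨i, hi⟩ : ∃ i, m i ≠ 0 := by
      by_contra! hc
      exact hm (Finsupp.ext fun i => (hc i).symm)
    have hle : Finsupp.single i 1 ≤ m := by
      rw [Finsupp.single_le_iff]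
      omega
    have := congrArg (coeff (m - Finsupp.single i 1)) (h i)
    rw [coeff_pderiv, tsub_add_cancel_of_le hle, coeff_zero, mul_eq_zero] at this
    exact this.resolve_right (Nat.cast_add_one_ne_zero _)

lemma totalDegree_pderiv_le {n N : ℕ} (i : Fin n) (p : MvPolynomial (Fin n) ℂ)
    (h : p.totalDegree ≤ N + 1) : (pderiv i p).totalDegree ≤ N := by
  refine Finset.sup_le fun m hm => ?_
  rw [mem_support_iff, coeff_pderiv] at hm
  have := (le_totalDegree (mem_support_iff.mpr (left_ne_zero_of_mul hm))).trans h
  rw [Finsupp.sum_add_index' (by simp) (by simp), Finsupp.sum_single_index rfl] at this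
  omega

/-- Transitivity: a vector field commuting with all constant fields is constant. -/
lemma mem_VectP_neg_one_of_forall_lie {n : ℕ} (D : Vect ℂ n)
    (h : ∀ v ∈ VectP ℂ n (-1), ⁅v, D⁆ = 0) : D ∈ VectP ℂ n (-1) := by
  refine mem_VectP_neg_one_of_const D fun j => ⟨_, eq_C_of_pderiv_eq_zero _ fun i => ?_⟩
  rw [← lie_pderiv_apply_X, h _ (pderiv_mem_VectP i), Derivation.zero_apply]

/-- Differentiating a nonzero field of `W` until one more derivative would annihilate it
produces a nonzero constant field of `W`. -/
lemma exists_const_mem {n : ℕ} (W : Submodule ℂ (Vect ℂ n)) (hW : W ≠ ⊥)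
    (hst : ∀ v ∈ VectP ℂ n (-1), ∀ D ∈ W, ⁅v, D⁆ ∈ W) :
    ∃ D ∈ W, D ∈ VectP ℂ n (-1) ∧ D ≠ 0 := by
  have key : ∀ (N : ℕ) (D : Vect ℂ n), D ∈ W → D ≠ 0 →
      (∀ j, (D (X j)).totalDegree ≤ N) → ∃ D ∈ W, D ∈ VectP ℂ n (-1) ∧ D ≠ 0 := by
    intro N
    induction N with
    | zero =>
      intro D hD h0 hdeg
      exact ⟨D, hD, mem_VectP_neg_one_of_const D fun j =>
        ⟨_, totalDegree_eq_zero_iff_eq_C.mp (Nat.le_zero.mp (hdeg j))⟩, h0⟩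
    | succ N ih =>
      intro D hD h0 hdeg
      by_cases hc : ∀ i, ⁅(pderiv i : Vect ℂ n), D⁆ = 0
      · refine ⟨D, hD, mem_VectP_neg_one_of_const D fun j =>
          ⟨_, eq_C_of_pderiv_eq_zero _ fun i => ?_⟩, h0⟩
        rw [← lie_pderiv_apply_X, hc, Derivation.zero_apply]
      · push Not at hc
        obtain ⟨i, hi⟩ := hc
        refine ih _ (hst _ (pderiv_mem_VectP i) D hD) hi fun j => ?_
        rw [lie_pderiv_apply_X]
        exact totalDegree_pderiv_le i _ (hdeg j)
  obtain ⟨D, hD, h0⟩ := W.ne_bot_iff.mp hW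
  exact key (Finset.univ.sup fun j => (D (X j)).totalDegree) D hD h0
    fun j => Finset.le_sup (f := fun j => (D (X j)).totalDegree) (Finset.mem_univ j)

/-- By irreducibility, a nonzero subspace stable under `L` contains all constant fields. -/
lemma VectP_neg_one_le {n : ℕ} {L : LieSubalgebra ℂ (Vect ℂ n)}
    (hm1 : L.toSubmodule ⊓ VectP ℂ n (-1) = VectP ℂ n (-1))
    (hirr : IsIrreducibleRep ℂ n L) (W : Submodule ℂ (Vect ℂ n)) (hW : W ≠ ⊥)
    (hst : ∀ x ∈ L, ∀ D ∈ W, ⁅x, D⁆ ∈ W) : VectP ℂ n (-1) ≤ W := by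
  have hVL : VectP ℂ n (-1) ≤ L.toSubmodule := inf_eq_right.mp hm1
  obtain ⟨D, hDW, hD, h0⟩ := exists_const_mem W hW fun v hv => hst v (hVL hv)
  have hF := hirr.2 (W ⊓ VectP ℂ n (-1)) (hm1.symm ▸ inf_le_right) fun x hx y hy =>
    ⟨hst x hx.1 y hy.1, lie_mem_VectP (by norm_num) hx.2 hy.2⟩
  rw [hm1] at hF
  rcases hF with hF | hF
  · exact absurd ((Submodule.eq_bot_iff _).mp hF D ⟨hDW, hD⟩) h0
  · exact inf_eq_right.mp hF

/-- A Lie subalgebra containing `L` is semisimple: a nonzero abelian ideal would contain the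
constant fields `V` and `[V, L₁]`, whence `[V, [V, L₁]] = 0` and `L₁ = 0` by transitivity. -/
lemma hasTrivialRadical_of_le {n : ℕ} {L : LieSubalgebra ℂ (Vect ℂ n)}
    (hm1 : L.toSubmodule ⊓ VectP ℂ n (-1) = VectP ℂ n (-1))
    (hirr : IsIrreducibleRep ℂ n L) (h1 : L.toSubmodule ⊓ VectP ℂ n 1 ≠ ⊥)
    (M : LieSubalgebra ℂ (Vect ℂ n)) [FiniteDimensional ℂ M] (hLM : L ≤ M) :
    LieAlgebra.HasTrivialRadical ℂ M := by
  rw [LieAlgebra.hasTrivialRadical_iff_no_abelian_ideals]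
  intro I hI
  by_contra hne
  have hmap : ∀ x : M, (x : Vect ℂ n) ∈ I.toSubmodule.map M.toSubmodule.subtype → x ∈ I := by
    rintro x ⟨y, hy, hyx⟩
    rwa [← Subtype.ext (a1 := y) (a2 := x) hyx]
  have hV := VectP_neg_one_le hm1 hirr (I.toSubmodule.map M.toSubmodule.subtype)
    (by
      intro h
      have := Submodule.map_injective_of_injective M.toSubmodule.injective_subtype
        (h.trans (Submodule.map_bot _).symm)
      exact hne (by simpa using this))
    (by
      rintro x hx _ ⟨y, hy, rfl⟩
      exact ⟨⁅(⟨x, hLM hx⟩ : M), y⁆, I.lie_mem hy, rfl⟩)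
  obtain ⟨Y, ⟨hYL, hY⟩, hY0⟩ := (Submodule.ne_bot_iff _).mp h1
  have hVM : ∀ v ∈ VectP ℂ n (-1), ∃ h : v ∈ M, (⟨v, h⟩ : M) ∈ I := fun v hv =>
    have h : v ∈ M := hLM (inf_eq_right.mp hm1 hv)
    ⟨h, hmap ⟨v, h⟩ (hV hv)⟩
  refine hY0 (eq_zero_of_mem_VectP (p := -1) (q := 1) (by norm_num)
    (mem_VectP_neg_one_of_forall_lie Y fun v hv => ?_) hY)
  refine eq_zero_of_mem_VectP (p := -1) (q := 0) (by norm_num)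
    (mem_VectP_neg_one_of_forall_lie _ fun w hw => ?_) (lie_mem_VectP (by norm_num) hv hY)
  obtain ⟨hvM, hvI⟩ := hVM v hv
  obtain ⟨hwM, hwI⟩ := hVM w hw
  have hvY : ⁅(⟨v, hvM⟩ : M), (⟨Y, hLM hYL⟩ : M)⁆ ∈ I := lie_mem_left ℂ M I _ _ hvI
  have := hI.trivial ⟨_, hwI⟩ ⟨_, hvY⟩
  exact congrArg (fun z : I => ((z : M) : Vect ℂ n)) this

/-- A form of Cartan's criterion for solvability: a subalgebra on which the Killing form of the
ambient Lie algebra vanishes is solvable. -/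
lemma isSolvable_of_killingForm_eq_zero {M : Type*} [LieRing M] [LieAlgebra ℂ M]
    [FiniteDimensional ℂ M] (S : LieSubalgebra ℂ M)
    (h : ∀ x ∈ S, ∀ y ∈ S, killingForm ℂ M x y = 0) : LieAlgebra.IsSolvable S := by
  have htf : LieModule.traceForm ℂ S M = 0 := by
    ext ⟨x, hx⟩ ⟨y, hy⟩
    exact h x hx y hy
  have hnil := LieModule.isNilpotent_derivedSeries_of_traceForm_eq_zero htf
  have hring : LieRing.IsNilpotent (LieAlgebra.derivedSeries ℂ S 1) := by
    rw [LieAlgebra.isNilpotent_iff_forall (R := ℂ)]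
    rintro ⟨x, hx⟩
    apply LieSubalgebra.isNilpotent_ad_of_isNilpotent_ad
      (LieAlgebra.derivedSeries ℂ S 1 : LieSubalgebra ℂ S) (x := ⟨x, hx⟩)
    apply LieSubalgebra.isNilpotent_ad_of_isNilpotent_ad S (x := x)
    exact (LieModule.isNilpotent_iff_forall' (R := ℂ)).mp hnil ⟨x, hx⟩
  obtain ⟨k, hk⟩ := LieAlgebra.IsSolvable.solvable ℂ (LieAlgebra.derivedSeries ℂ S 1)
  rw [LieIdeal.derivedSeries_eq_bot_iff] at hk
  refine LieAlgebra.IsSolvable.mk (R := ℂ) (k := k + 1) ?_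
  rwa [LieAlgebra.derivedSeries_def, LieAlgebra.derivedSeriesOfIdeal_add]

/-- Let `E = ℂ^n` (`n ≥ 1`) and `L = L₋₁ ⊕ L₀ ⊕ L₁` an irreducible graded Lie subalgebra of
`Vect_pol(E)` with `L₋₁ = Vect₋₁(E)` and `L₁ ≠ 0`.  Then every finite-dimensional Lie
subalgebra `L'` of `Vect_pol(E)` containing `L` equals `L`. -/
theorem statement14 (n : ℕ) (hn : 0 < n)
    (L : LieSubalgebra ℂ (Vect ℂ n))
    (hgraded : L.toSubmodule =
      (L.toSubmodule ⊓ VectP ℂ n (-1)) ⊔ (L.toSubmodule ⊓ VectP ℂ n 0) ⊔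
        (L.toSubmodule ⊓ VectP ℂ n 1))
    (hm1 : L.toSubmodule ⊓ VectP ℂ n (-1) = VectP ℂ n (-1))
    (hirr : IsIrreducibleRep ℂ n L)
    (h1 : L.toSubmodule ⊓ VectP ℂ n 1 ≠ ⊥) :
    ∀ L' : LieSubalgebra ℂ (Vect ℂ n), FiniteDimensional ℂ L' → L ≤ L' → L' = L := by
  intro M hfin hLM
  have hLfin : FiniteDimensional ℂ L :=
    Submodule.finiteDimensional_of_le (show L.toSubmodule ≤ M.toSubmodule from hLM)
  have hMrad := hasTrivialRadical_of_le hm1 hirr h1 M hLM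
  have hLrad := hasTrivialRadical_of_le hm1 hirr h1 L le_rfl
  -- `LM` is `L` inside `M`, and `P` its orthogonal complement for the Killing form of `M`.
  set LM : Submodule ℂ M := L.toSubmodule.comap M.toSubmodule.subtype
  set P : Submodule ℂ M := LinearMap.BilinForm.orthogonal (killingForm ℂ M) LM with hP
  have memP : ∀ x : M, x ∈ P ↔ ∀ y : M, (y : Vect ℂ n) ∈ L → killingForm ℂ M y x = 0 :=
    fun x => Iff.rfl
  have hPst : ∀ x : M, (x : Vect ℂ n) ∈ L → ∀ y ∈ P, ⁅x, y⁆ ∈ P := by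
    intro x hx y hy
    rw [memP] at hy ⊢
    intro z hz
    rw [← LieModule.traceForm_apply_lie_apply]
    exact hy ⁅z, x⁆ (L.lie_mem hz hx)
  have hPbot : P = ⊥ := by
    by_contra hne
    have hV := VectP_neg_one_le hm1 hirr (P.map M.toSubmodule.subtype)
      (fun h => hne (Submodule.map_injective_of_injective M.toSubmodule.injective_subtype
        (h.trans (Submodule.map_bot _).symm)))
      (by
        rintro x hx _ ⟨y, hy, rfl⟩
        exact ⟨⁅(⟨x, hLM hx⟩ : M), y⁆, hPst ⟨x, hLM hx⟩ hx y hy, rfl⟩)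
    let ι : L →ₗ⁅ℂ⁆ M := LieSubalgebra.inclusion hLM
    -- `P ∩ L` as an ideal of `L`; it is solvable by Cartan's criterion, hence zero.
    let I : LieIdeal ℂ L :=
      { P.comap (ι : L →ₗ[ℂ] M) with
        lie_mem := fun {x y} hy => hPst (ι x) x.2 (ι y) hy }
    have hsolv : LieAlgebra.IsSolvable I := by
      let f : I →ₗ⁅ℂ⁆ M := ι.comp I.incl
      have hf : Function.Injective f :=
        (LieSubalgebra.inclusion_injective hLM).comp Subtype.val_injective
      have : LieAlgebra.IsSolvable f.range := by
        refine isSolvable_of_killingForm_eq_zero _ ?_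
        rintro _ ⟨x, rfl⟩ _ ⟨y, rfl⟩
        exact (memP (f y)).mp y.2 (f x) (x : L).2
      exact (LieEquiv.ofInjective f hf).injective.lieAlgebra_isSolvable
    have hI : I = ⊥ := LieAlgebra.HasTrivialRadical.eq_bot_of_isSolvable I
    -- but it contains the nonzero space of constant fields.
    refine hirr.1 ((Submodule.eq_bot_iff _).mpr fun v hv => ?_)
    obtain ⟨y, hy, hyv⟩ := hV hv.2
    have hvI : (⟨v, hv.1⟩ : L) ∈ I := by
      change ι ⟨v, hv.1⟩ ∈ P
      rwa [show ι ⟨v, hv.1⟩ = y from Subtype.ext hyv.symm]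
    rw [hI, LieSubmodule.mem_bot] at hvI
    exact congrArg Subtype.val hvI
  have hnd : (killingForm ℂ M).Nondegenerate := LieAlgebra.IsKilling.killingForm_nondegenerate ℂ M
  have htop : LM = ⊤ := by
    have hoo := LinearMap.BilinForm.orthogonal_orthogonal hnd
      (LieModule.traceForm_isSymm ℂ M M).isRefl LM
    rw [← hP, hPbot, LinearMap.BilinForm.orthogonal_bot] at hoo
    exact hoo.symm
  refine le_antisymm (fun x hx => ?_) hLM
  have : (⟨x, hx⟩ : M) ∈ LM := htop ▸ Submodule.mem_top
  exact this
end
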